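/- Define U : ℝ → ℝ by U(x) = (100 − 50√2)x for x ≤ 1/(2√2) and U(x) = 100x(1−x) − 12.5 for x > 1/(2√2). Then U is differentiable at x₀ = 1/(2√2) with derivative U'(x₀) = 100 − 50√2; in particular U is continuous at x₀. -/

import Mathlib

/-! The line through the origin of slope `ψ'(x₀)` touches the parabola `ψ(x) = ax(1 - x) - c` at
`x₀` exactly when `ψ(x₀) = ψ'(x₀)x₀`, i.e. when `ax₀² = c`. For `a = 100` and `c = 12.5` the
positive root is `x₀ = 1/(2√2) = √2/4`. Two functions with the same value and the same derivative at
`x₀` can be glued along any set without losing that derivative. -/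

section Piecewise

variable {𝕜 E F : Type*} [NontriviallyNormedField 𝕜]
  [AddCommGroup E] [Module 𝕜 E] [TopologicalSpace E]
  [AddCommGroup F] [Module 𝕜 F] [TopologicalSpace F]

theorem hasFDerivAt_piecewise {f g : E → F} {f' : E →L[𝕜] F} {x : E}
    (s : Set E) [∀ y, Decidable (y ∈ s)] (hf : HasFDerivWithinAt f f' s x)
    (hg : HasFDerivWithinAt g f' sᶜ x) (hfg : f x = g x) :
    HasFDerivAt (s.piecewise f g) f' x := by
  have value_at : s.piecewise f g x = f x := by
    by_cases hx : x ∈ s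
    · exact s.piecewise_eq_of_mem f g hx
    · exact (s.piecewise_eq_of_notMem f g hx).trans hfg.symm
  have on_set : HasFDerivWithinAt (s.piecewise f g) f' s x :=
    hf.congr (s.piecewise_eqOn f g) value_at
  have on_compl : HasFDerivWithinAt (s.piecewise f g) f' sᶜ x :=
    hg.congr (s.piecewise_eqOn_compl f g) (value_at.trans hfg)
  rw [← hasFDerivWithinAt_univ, ← s.union_compl_self]
  exact on_set.union on_compl

end Piecewise

section Parabola

variable {𝕜 : Type*} [NontriviallyNormedField 𝕜]

theorem hasDerivAt_mul_mul_one_sub_sub_const (a c x : 𝕜) :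
    HasDerivAt (fun y => a * y * (1 - y) - c) (a * (1 - 2 * x)) x :=
  ((((hasDerivAt_id' x).const_mul a).mul ((hasDerivAt_id' x).const_sub 1)).sub_const c).congr_deriv
    (by ring)

theorem hasDerivAt_piecewise_tangent_parabola {a c x₀ : 𝕜} (s : Set 𝕜)
    [∀ y, Decidable (y ∈ s)] (tangency : a * x₀ ^ 2 = c) :
    HasDerivAt
      (s.piecewise (fun y => a * (1 - 2 * x₀) * y) (fun y => a * y * (1 - y) - c))
      (a * (1 - 2 * x₀)) x₀ := by
  have line : HasDerivAt (fun y => a * (1 - 2 * x₀) * y) (a * (1 - 2 * x₀)) x₀ :=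
    hasDerivAt_const_mul _
  have parabola := hasDerivAt_mul_mul_one_sub_sub_const a c x₀
  have same_value : a * (1 - 2 * x₀) * x₀ = a * x₀ * (1 - x₀) - c := by
    linear_combination -tangency
  exact hasDerivAt_iff_hasFDerivAt.mpr <| hasFDerivAt_piecewise s
    line.hasFDerivAt.hasFDerivWithinAt parabola.hasFDerivAt.hasFDerivWithinAt same_value

end Parabola

/-- The left half of the exact one-bump obstacle solution,
`U(x) = (100 − 50√2)x` for `x ≤ 1/(2√2)` and `U(x) = 100x(1−x) − 12.5` for `x > 1/(2√2)`,
is differentiable at the contact point `x₀ = 1/(2√2)` with `U'(x₀) = 100 − 50√2`;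
in particular it is continuous there. -/
theorem stmt_13 (U : ℝ → ℝ)
    (hU : ∀ x, U x = if x ≤ 1 / (2 * Real.sqrt 2)
        then (100 - 50 * Real.sqrt 2) * x
        else 100 * x * (1 - x) - 12.5) :
    HasDerivAt U (100 - 50 * Real.sqrt 2) (1 / (2 * Real.sqrt 2)) ∧
      ContinuousAt U (1 / (2 * Real.sqrt 2)) := by
  have contact_point : 1 / (2 * √2) = √2 / 4 := by
    rw [div_mul_eq_div_div_swap, ← Real.sqrt_div_self']
    ring
  have tangency : 100 * (1 / (2 * √2)) ^ 2 = (12.5 : ℝ) := by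
    rw [div_pow, mul_pow, Real.sq_sqrt zero_le_two]
    norm_num
  have slope : 100 * (1 - 2 * (1 / (2 * √2))) = 100 - 50 * √2 := by
    rw [contact_point]
    ring
  have U_eq : U = (Set.Iic (1 / (2 * √2))).piecewise
      (fun x => (100 - 50 * √2) * x) (fun x => 100 * x * (1 - x) - 12.5) := funext hU
  have smooth_fit : HasDerivAt U (100 - 50 * √2) (1 / (2 * √2)) := by
    rw [U_eq, ← slope]
    exact hasDerivAt_piecewise_tangent_parabola _ tangency
  exact ⟨smooth_fit, smooth_fit.continuousAt⟩
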